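/- Let φ be the morphism on {a,b} with φ(a) = a·x·a and φ(b) = b, where x is a finite word containing the letter b, let w be the infinite fixed point of φ starting with a, and let h_b be the largest k such that b^k is a factor of x. For l ≥ h_b + 2, write l − 1 = q·(h_b + 1) + r with 0 ≤ r ≤ h_b (Euclidean division) and set p(l) = 1 + q·(h_b + |φ(a)|) + r. Then every factor of w of length at most p(l) is a factor of φ(y) for some factor y of w of length at most l; furthermore, p(l) > l. -/

import Mathlib

/-!
Cut `w = φ(w)` into the blocks `φ(w 0), φ(w 1), …`, the `j`-th one starting at position
`blockStart φ w j`.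

Every window of `h_b + 1` letters of `w` contains an `a` (`exists_false_in_window`): a run of
`h_b + 1` letters `b` either lies inside one block `a·x·a`, hence inside `x`, which is excluded,
or it is the image of an equally long run at a strictly earlier position, and one descends.

Hence any `h_b + 1` consecutive blocks have total length at least `h_b + |φ(a)|`, and any
`q (h_b + 1) + r = l - 1` consecutive blocks have total length at least
`q (h_b + |φ(a)|) + r = p - 1`. A factor of length at most `p` starting in block `j` meets that
block in at least one letter, so it is covered by the `l` blocks `j, …, j + l - 1`; take
`y = w[j..j+l-1]`.
-/

/-- The factor `w[i..i+l-1]` of an infinite word, as a list. -/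
def seg {α : Type*} (w : ℕ → α) (i l : ℕ) : List α :=
  (List.range l).map fun k => w (i + k)

/-- The finite word `u` occurs in `w` at position `i`. -/
def occursAt {α : Type*} (u : List α) (w : ℕ → α) (i : ℕ) : Prop :=
  u = seg w i u.length

/-- `u` is a factor of the infinite word `w`. -/
def IsFactor {α : Type*} (u : List α) (w : ℕ → α) : Prop :=
  ∃ i, occursAt u w i

/-- The shift, erasing the first letter. -/
def shift {α : Type*} (w : ℕ → α) : ℕ → α := fun n => w (n + 1)

/-- Strict lexicographic order on infinite words. -/
def lexLt {α : Type*} [LinearOrder α] (u v : ℕ → α) : Prop :=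
  ∃ n, (∀ k < n, u k = v k) ∧ u n < v n

/-- Non-strict lexicographic order on infinite words. -/
def lexLe {α : Type*} [LinearOrder α] (u v : ℕ → α) : Prop :=
  lexLt u v ∨ u = v

/-- A morphism `φ : α → List α` applied to a finite word. -/
def substList {α : Type*} (φ : α → List α) (u : List α) : List α :=
  u.flatMap φ

/-- A (non-erasing) morphism applied to an infinite word:
letter number `n` of `φ(w[0])φ(w[1])⋯`. -/
def substInf {α : Type*} (φ : α → List α) (w : ℕ → α) : ℕ → α :=
  fun n => (substList φ (seg w 0 (n + 1))).getD n (w 0)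

/-- A morphism is non-erasing if images of all letters are nonempty. -/
def NonErasing {α : Type*} (φ : α → List α) : Prop := ∀ c, φ c ≠ []

/-- `w` is ultimately periodic, i.e. of the form `u·v·v·v·⋯` with `v` nonempty. -/
def UltimatelyPeriodic {α : Type*} (w : ℕ → α) : Prop :=
  ∃ p, 0 < p ∧ ∃ N, ∀ n, N ≤ n → w (n + p) = w n

/-- Membership in the orbit closure `L_w` of `w` (the closure of `{σⁿ(w)}` in the
product topology): every prefix of `z` occurs in `w`. -/
def InOrbitClosure {α : Type*} (z w : ℕ → α) : Prop :=
  ∀ n, ∃ m, seg z 0 n = seg w m n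

/-- Every factor of `w` occurs infinitely often in `w`. -/
def Recurrent {α : Type*} (w : ℕ → α) : Prop :=
  ∀ u : List α, IsFactor u w → ∀ N, ∃ i, N ≤ i ∧ occursAt u w i

/-- Every factor of `w` occurs in `w` with bounded gaps: there is `C` such that every
window of length `C` contains an occurrence. -/
def UniformlyRecurrent {α : Type*} (w : ℕ → α) : Prop :=
  ∀ u : List α, IsFactor u w →
    ∃ C, ∀ i, ∃ j, i ≤ j ∧ j + u.length ≤ i + C ∧ occursAt u w j

/-- A non-erasing morphism is order-preserving if for all infinite words `u, v`:
`u < v` iff `φ(u) < φ(v)`. -/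
def OrderPreserving {α : Type*} [LinearOrder α] (φ : α → List α) : Prop :=
  ∀ u v : ℕ → α, lexLt u v ↔ lexLt (substInf φ u) (substInf φ v)

/-- `z₀` is the lexicographically greatest element of `S`. -/
def IsLexGreatest {α : Type*} [LinearOrder α] (S : Set (ℕ → α)) (z₀ : ℕ → α) : Prop :=
  z₀ ∈ S ∧ ∀ z ∈ S, z = z₀ ∨ lexLt z z₀

/-- `z₀` is the lexicographically least element of `S`. -/
def IsLexLeast {α : Type*} [LinearOrder α] (S : Set (ℕ → α)) (z₀ : ℕ → α) : Prop :=
  z₀ ∈ S ∧ ∀ z ∈ S, z = z₀ ∨ lexLt z₀ z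

/-- A sequence of reals is equidistributed on `[0,1]`. -/
def Equidistributed (x : ℕ → ℝ) : Prop :=
  ∀ c d : ℝ, 0 ≤ c → c ≤ d → d ≤ 1 →
    Filter.Tendsto
      (fun N : ℕ => (((Finset.range N).filter fun n => c ≤ x n ∧ x n ≤ d).card : ℝ) / N)
      Filter.atTop (nhds (d - c))

/-- Prepend a finite word to an infinite word. -/
def prependWord {α : Type*} (u : List α) (w : ℕ → α) : ℕ → α :=
  fun n => if h : n < u.length then u.get ⟨n, h⟩ else w (n - u.length)

/-- The position in `φ(w)` at which the image of the letter `w j` starts. -/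
def blockStart (φ : Bool → List Bool) (w : ℕ → Bool) (j : ℕ) : ℕ :=
  (substList φ (seg w 0 j)).length

theorem seg_length {α : Type*} (w : ℕ → α) (i l : ℕ) : (seg w i l).length = l := by
  simp [seg]

theorem seg_add {α : Type*} (w : ℕ → α) (i m n : ℕ) :
    seg w i (m + n) = seg w i m ++ seg w (i + m) n := by
  simp [seg, List.range_add, Function.comp_def, Nat.add_assoc]

theorem substList_append {α : Type*} (φ : α → List α) (u v : List α) :
    substList φ (u ++ v) = substList φ u ++ substList φ v := by
  simp [substList]

section Blocks

variable {φ : Bool → List Bool} {w : ℕ → Bool}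

theorem blockStart_zero : blockStart φ w 0 = 0 := by
  simp [blockStart, seg, substList]

theorem blockStart_succ (j : ℕ) :
    blockStart φ w (j + 1) = blockStart φ w j + (φ (w j)).length := by
  simp [blockStart, seg_add, substList_append]
  simp [seg, substList]

theorem blockStart_add_le (hne : NonErasing φ) (j m : ℕ) :
    blockStart φ w j + m ≤ blockStart φ w (j + m) := by
  induction m with
  | zero => simp
  | succ m ih =>
    have h := blockStart_succ (φ := φ) (w := w) (j + m)
    have := List.length_pos_of_ne_nil (hne (w (j + m)))
    rw [← Nat.add_assoc j m 1]
    omega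

theorem exists_block (hne : NonErasing φ) (i : ℕ) :
    ∃ j, blockStart φ w j ≤ i ∧ i < blockStart φ w (j + 1) := by
  induction i with
  | zero =>
    have := blockStart_add_le (w := w) hne 0 1
    exact ⟨0, by simp [blockStart_zero], by omega⟩
  | succ i ih =>
    obtain ⟨j, h1, h2⟩ := ih
    by_cases h : i + 1 < blockStart φ w (j + 1)
    · exact ⟨j, by omega, h⟩
    · have := blockStart_add_le (w := w) hne (j + 1) 1
      exact ⟨j + 1, by omega, by omega⟩

/-- The images of the first `j` letters of a fixed point form a prefix of it. -/
theorem seg_blockStart (hne : NonErasing φ) (hfp : substInf φ w = w) (j : ℕ) :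
    seg w 0 (blockStart φ w j) = substList φ (seg w 0 j) := by
  apply List.ext_getElem
  · simp [seg_length, blockStart]
  · intro n h1 h2
    have hn : n < (substList φ (seg w 0 (n + 1))).length := by
      have := blockStart_add_le (w := w) hne 0 (n + 1)
      rw [Nat.zero_add, blockStart_zero] at this
      simp only [blockStart] at this
      omega
    have e : w n = (substList φ (seg w 0 (n + 1)))[n] := by
      conv_lhs => rw [← hfp]
      simp only [substInf]
      exact List.getD_eq_getElem _ _ hn
    have e1 : (seg w 0 (blockStart φ w j))[n] = w n := by simp [seg]
    rw [e1, e]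
    -- Of the two prefixes of `w` whose images are compared, one is a prefix of the other.
    rcases Nat.le_total j (n + 1) with h | h
    · obtain ⟨d, hd⟩ := Nat.exists_eq_add_of_le h
      simp only [hd, seg_add, substList_append]
      exact List.getElem_append_left h2
    · obtain ⟨d, hd⟩ := Nat.exists_eq_add_of_le h
      simp only [hd, seg_add w 0 (n + 1) d, substList_append]
      exact (List.getElem_append_left hn).symm

theorem seg_blocks (hne : NonErasing φ) (hfp : substInf φ w = w) (j m d : ℕ)
    (hd : blockStart φ w (j + m) = blockStart φ w j + d) :
    seg w (blockStart φ w j) d = substList φ (seg w j m) := by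
  have h := seg_blockStart hne hfp (j + m)
  rw [hd, seg_add, seg_add, substList_append, seg_blockStart hne hfp j] at h
  simpa using h

theorem apply_blockStart_add (hne : NonErasing φ) (hfp : substInf φ w = w) (j s : ℕ)
    (hs : s < (φ (w j)).length) :
    w (blockStart φ w j + s) = (φ (w j))[s] := by
  have h := seg_blocks hne hfp j 1 _ (blockStart_succ j)
  have h2 : substList φ (seg w j 1) = φ (w j) := by simp [seg, substList]
  rw [h2] at h
  rw [← List.getElem_of_eq h (by rwa [seg_length])]
  simp [seg]

end Blocks

/-- Runs of `b` in `w` have length at most `h_b`. -/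
theorem exists_false_in_window
    {x : List Bool} {φ : Bool → List Bool} (hne : NonErasing φ)
    (hφa : φ false = false :: (x ++ [false])) (hφb : φ true = [true])
    {w : ℕ → Bool} (h0 : w 0 = false) (hfp : substInf φ w = w) {hb : ℕ}
    (hbmax : ¬ List.replicate (hb + 1) true <:+: x) (i : ℕ) :
    ∃ k, k ≤ hb ∧ w (i + k) = false := by
  induction i using Nat.strong_induction_on with
  | _ i ih =>
  by_contra hcon
  have hrun : ∀ k, k ≤ hb → w (i + k) = true := by
    intro k hk
    by_contra h
    exact hcon ⟨k, hk, by simpa using h⟩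
  obtain ⟨j, h1, h2⟩ := exists_block (w := w) hne i
  obtain ⟨s, rfl⟩ := Nat.exists_eq_add_of_le h1
  rw [blockStart_succ] at h2
  have hs : s < (φ (w j)).length := by omega
  have hlet := apply_blockStart_add hne hfp j
  cases hj : w j with
  | false =>
    -- The run starts inside a block `a·x·a`, so it stays inside `x`.
    simp only [hj, hφa] at hlet hs
    simp only [List.length_cons, List.length_append, List.length_nil] at hlet hs
    have hs0 : s ≠ 0 := by
      rintro rfl
      have e1 := hlet 0 (by omega)
      have e2 := hrun 0 (by omega)
      simp_all
    have hend : s + hb < x.length + 1 := by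
      by_contra hge
      have e1 := hlet (x.length + 1) (by omega)
      have e2 := hrun (x.length + 1 - s) (by omega)
      rw [show blockStart φ w j + s + (x.length + 1 - s) = blockStart φ w j + (x.length + 1) by
        omega] at e2
      simp_all
    obtain ⟨t, rfl⟩ := Nat.exists_eq_succ_of_ne_zero hs0
    apply hbmax
    have : List.replicate (hb + 1) true = (x.drop t).take (hb + 1) := by
      apply List.ext_getElem
      · simp; omega
      · intro k hk1 hk2
        simp only [List.length_replicate] at hk1
        have e1 := hlet (t + k + 1) (by omega)
        have e2 := hrun k (by omega)
        rw [show blockStart φ w j + t.succ + k = blockStart φ w j + (t + k + 1) by omega, e1,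
          List.getElem_cons_succ, List.getElem_append_left (by omega)] at e2
        simp [e2]
    rw [this]
    exact (List.take_prefix _ _).isInfix.trans (List.drop_suffix _ _).isInfix
  | true =>
    -- The run starts at a block boundary and is the image of a run starting at `j`.
    have hs0 : s = 0 := by simpa [hj, hφb] using hs
    subst hs0
    have hpos : ∀ k, k ≤ hb →
        blockStart φ w (j + k) = blockStart φ w j + k ∧ w (j + k) = true := by
      have hstep : ∀ k, k ≤ hb → blockStart φ w (j + k) = blockStart φ w j + k →
          w (j + k) = true := by
        intro k hk hB
        by_contra hf
        have hf : w (j + k) = false := by simpa using hf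
        have e1 := apply_blockStart_add hne hfp (j + k) 0 (by simp [hf, hφa])
        have e2 := hrun k hk
        simp_all
      intro k
      induction k with
      | zero => intro _; exact ⟨rfl, hj⟩
      | succ k ihk =>
        intro hk
        obtain ⟨hB, hw⟩ := ihk (by omega)
        have hBsucc : blockStart φ w (j + (k + 1)) = blockStart φ w j + (k + 1) := by
          rw [← Nat.add_assoc j k 1, blockStart_succ, hB, hw, hφb]
          simp [Nat.add_assoc]
        exact ⟨hBsucc, hstep _ hk hBsucc⟩
    -- `j ≥ 1` because `w` starts with `a`, and `|φ(a)| ≥ 2` makes the descent strict.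
    have hlt : j < blockStart φ w j + 0 := by
      cases j with
      | zero => simp [h0] at hj
      | succ j =>
        have e1 := blockStart_add_le (w := w) hne 1 j
        have e2 := blockStart_succ (φ := φ) (w := w) 0
        rw [h0, hφa, blockStart_zero] at e2
        simp only [List.length_cons, List.length_append, List.length_nil] at e2
        rw [Nat.add_comm 1 j] at e1
        simp only [Nat.zero_add] at e2
        omega
    obtain ⟨k, hk, hf⟩ := ih j hlt
    simp [(hpos k hk).2] at hf

/-- Since one of any `h_b + 1` consecutive letters of `w` is an `a`, their images have total
length at least `h_b + |φ(a)|`. -/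
theorem blockStart_window {φ : Bool → List Bool} (hne : NonErasing φ) {w : ℕ → Bool} {hb : ℕ}
    (hwin : ∀ i, ∃ k, k ≤ hb ∧ w (i + k) = false) (j : ℕ) :
    blockStart φ w j + (hb + (φ false).length) ≤ blockStart φ w (j + (hb + 1)) := by
  obtain ⟨k, hk, hf⟩ := hwin j
  obtain ⟨d, rfl⟩ := Nat.exists_eq_add_of_le hk
  have e1 := blockStart_add_le (w := w) hne j k
  have e2 := blockStart_succ (φ := φ) (w := w) (j + k)
  have e3 := blockStart_add_le (w := w) hne (j + k + 1) d
  rw [hf] at e2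
  rw [show j + (k + d + 1) = j + k + 1 + d by omega]
  omega

theorem blockStart_windows {φ : Bool → List Bool} (hne : NonErasing φ) {w : ℕ → Bool} {hb : ℕ}
    (hwin : ∀ i, ∃ k, k ≤ hb ∧ w (i + k) = false) (j q : ℕ) :
    blockStart φ w j + q * (hb + (φ false).length) ≤ blockStart φ w (j + q * (hb + 1)) := by
  induction q with
  | zero => simp
  | succ q ih =>
    have h := blockStart_window hne hwin (j + q * (hb + 1))
    rw [Nat.succ_mul, Nat.succ_mul, ← Nat.add_assoc j]
    omega

/-- (Alphabet `{a,b}`, `a = false`, `b = true`.)  Let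
`φ(a) = a·x·a`, `φ(b) = b` with `b` occurring in `x`, `w` the infinite fixed point of
`φ` starting with `a`, and `h_b` the largest `k` with `bᵏ` a factor of `x`.  For
`l ≥ h_b + 2`, writing `l − 1 = q(h_b+1) + r` (Euclidean division) and
`p(l) = 1 + q(h_b + |φ(a)|) + r`, every factor of `w` of length at most `p(l)` is a
factor of `φ(y)` for some factor `y` of `w` of length at most `l`; and `p(l) > l`. -/
theorem factors_lift_through_phi
    (x : List Bool) (hx : true ∈ x)
    (φ : Bool → List Bool)
    (hφa : φ false = false :: (x ++ [false])) (hφb : φ true = [true])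
    (w : ℕ → Bool) (h0 : w 0 = false) (hfp : substInf φ w = w)
    (hb : ℕ)
    (hbocc : List.replicate hb true <:+: x)
    (hbmax : ¬ List.replicate (hb + 1) true <:+: x)
    (l : ℕ) (hl : hb + 2 ≤ l)
    (q r p : ℕ) (hq : q = (l - 1) / (hb + 1)) (hr : r = (l - 1) % (hb + 1))
    (hp : p = 1 + q * (hb + (φ false).length) + r) :
    (∀ u : List Bool, IsFactor u w → u.length ≤ p →
        ∃ y : List Bool, IsFactor y w ∧ y.length ≤ l ∧ u <:+: substList φ y) ∧
    l < p := by
  have hne : NonErasing φ := by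
    intro c
    cases c <;> simp [hφa, hφb]
  have hdiv : q * (hb + 1) + r = l - 1 := by
    rw [hq, hr, Nat.mul_comm]
    exact Nat.div_add_mod _ _
  refine ⟨?_, ?_⟩
  · rintro u ⟨i, hu⟩ hlen
    have hwin := exists_false_in_window hne hφa hφb h0 hfp hbmax
    obtain ⟨j, hj1, hj2⟩ := exists_block (w := w) hne i
    have e1 := blockStart_windows hne hwin (j + 1) q
    have e2 := blockStart_add_le (w := w) hne (j + 1 + q * (hb + 1)) r
    rw [show j + 1 + q * (hb + 1) + r = j + l by omega] at e2
    refine ⟨seg w j l, ⟨j, by simp [occursAt, seg_length]⟩, by simp [seg_length], ?_⟩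
    obtain ⟨s, rfl⟩ := Nat.exists_eq_add_of_le hj1
    obtain ⟨t, ht⟩ := Nat.exists_eq_add_of_le
      (show blockStart φ w j + s + u.length ≤ blockStart φ w (j + l) by omega)
    rw [← seg_blocks hne hfp j l (s + u.length + t) (by omega), seg_add, seg_add, ← hu]
    exact ⟨_, _, rfl⟩
  · have hxl : 0 < x.length := List.length_pos_of_mem hx
    have hq1 : 1 ≤ q := by
      rw [hq]
      exact (Nat.one_le_div_iff (by omega)).2 (by omega)
    have hn : (φ false).length = x.length + 2 := by simp [hφa]
    have hmul : q * (hb + 1) + q ≤ q * (hb + (φ false).length) := by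
      rw [← Nat.mul_succ]
      exact Nat.mul_le_mul_left q (by omega)
    omega
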